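/- arXiv:2509.25212 — 9 statements merged into one kernel-verified Lean document; each statement's English description precedes it below -/
import Mathlib

section
/- Let R be a commutative ring with an algebra-compatible closure cl, and let A, B, C be approximate ideals of R. Suppose A equals the approximate product of B and C, i.e. A = cl(⟨{b*c : b ∈ B, c ∈ C}⟩) where ⟨·⟩ denotes the generated ideal, and suppose A is an approximately prime ideal that is cl-closed (cl A = A). Then B ⊆ A or C ⊆ A. -/
open Pointwise

structure AlgClosure (R : Type*) [Ring R] where
  cl : Set R → Set R
  extensive : ∀ A : Set R, A ⊆ cl A
  mono : ∀ A B : Set R, A ⊆ B → cl A ⊆ cl B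
  idem : ∀ A : Set R, cl (cl A) = cl A
  add_compat : ∀ A B : Set R, cl A + cl B ⊆ cl (A + B)
  smul_left : ∀ (r : R) (A : Set R), r • cl A ⊆ cl (r • A)
  smul_right : ∀ (r : R) (A : Set R), (· * r) '' cl A ⊆ cl ((· * r) '' A)

def IsApproxIdeal {R : Type*} [Ring R] (c : AlgClosure R) (I : Set R) : Prop :=
  (0 : R) ∈ I ∧ (∀ x ∈ I, ∀ y ∈ I, x + y ∈ I) ∧ (∀ x ∈ I, -x ∈ I) ∧
    (∀ (r : R), ∀ x ∈ I, r * x ∈ c.cl I) ∧ (∀ (r : R), ∀ x ∈ I, x * r ∈ c.cl I)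

def IsApproxPrime {R : Type*} [Ring R] (c : AlgClosure R) (P : Set R) : Prop :=
  IsApproxIdeal c P ∧ P ≠ Set.univ ∧ ∀ x y : R, x * y ∈ c.cl P → x ∈ P ∨ y ∈ P


/-- factorization property for cl-closed approximately prime ideals. -/
theorem stmt_1 {R : Type*} [CommRing R] (c : AlgClosure R) (A B C : Set R)
    (hA : IsApproxIdeal c A) (hB : IsApproxIdeal c B) (hC : IsApproxIdeal c C)
    (hprod : A = c.cl (Ideal.span {x : R | ∃ b ∈ B, ∃ cc ∈ C, x = b * cc} : Set R))
    (hprime : IsApproxPrime c A) (hclosed : c.cl A = A) :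
    B ⊆ A ∨ C ⊆ A := by
  by_contra! h
  obtain ⟨h1, h2⟩ := h
  obtain ⟨b, hb, hbA⟩ := Set.not_subset.mp h1
  obtain ⟨d, hd, hdA⟩ := Set.not_subset.mp h2
  have hm : b * d ∈ A := by
    rw [hprod]
    exact c.extensive _ (Ideal.subset_span ⟨b, hb, d, hd, rfl⟩)
  rcases hprime.2.2 b d (c.extensive _ hm) with h | h
  · exact hbA h
  · exact hdA h
end

section
/- Let f : R → S be a ring homomorphism between rings carrying algebra-compatible closures cl_R and cl_S, and suppose f is Φ-preimage-continuous (f⁻¹(cl_S B) ⊆ cl_R(f⁻¹ B) for all B ⊆ S) and Φ-image-morphic (f(cl_R A) ⊆ cl_S(f(A)) for all A ⊆ R). If J is an approximate ideal of S, then f⁻¹(J) is an approximate ideal of R; and if J is approximately prime, then f⁻¹(J) is approximately prime. -/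
open Pointwise

/-- preimages under Φ-continuous, Φ-image-morphic homomorphisms
preserve approximate ideals and approximate primeness. -/
theorem stmt_4 {R S : Type*} [Ring R] [Ring S]
    (cR : AlgClosure R) (cS : AlgClosure S) (f : R →+* S)
    (hpre : ∀ B : Set S, f ⁻¹' (cS.cl B) ⊆ cR.cl (f ⁻¹' B))
    (him : ∀ A : Set R, f '' (cR.cl A) ⊆ cS.cl (f '' A))
    (J : Set S) (hJ : IsApproxIdeal cS J) :
    IsApproxIdeal cR (f ⁻¹' J) ∧
      (IsApproxPrime cS J → IsApproxPrime cR (f ⁻¹' J)) := by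
  obtain ⟨h0, ha, hn, hl, hr⟩ := hJ
  have key : IsApproxIdeal cR (f ⁻¹' J) := by
    refine ⟨?_, ?_, ?_, ?_, ?_⟩
    · simpa using h0
    · intro x hx y hy
      simpa using ha _ hx _ hy
    · intro x hx
      simpa using hn _ hx
    · intro r x hx
      apply hpre
      simpa using hl (f r) _ hx
    · intro r x hx
      apply hpre
      simpa using hr (f r) _ hx
  refine ⟨key, ?_⟩
  rintro ⟨-, hne, hp⟩
  refine ⟨key, ?_, ?_⟩
  · intro hu
    apply hne
    have h1 : (1 : S) ∈ J := by
      have : (1 : R) ∈ f ⁻¹' J := by rw [hu]; trivial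
      simpa using this
    ext s
    refine ⟨fun _ => trivial, fun _ => ?_⟩
    have := hp s s (by simpa using hl (s * s) 1 h1)
    tauto
  · intro x y hxy
    apply hp (f x) (f y)
    have h := him _ ⟨_, hxy, rfl⟩
    rw [map_mul] at h
    exact cS.mono _ _ (Set.image_preimage_subset f J) h
end

section
/- Let f : R → S be a surjective ring homomorphism between rings carrying algebra-compatible closures cl_R and cl_S, and suppose f is Φ-image-morphic (f(cl_R A) ⊆ cl_S(f(A)) for all A ⊆ R). If I is an approximate ideal of R, then f(I) is an approximate ideal of S. If, in addition, f is Φ-preimage-continuous (f⁻¹(cl_S B) ⊆ cl_R(f⁻¹ B) for all B ⊆ S), I is approximately prime, and Ker f ⊆ I, then f(I) is approximately prime. -/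
open Pointwise

/-- images of approximate ideals under surjections; primeness is
preserved when moreover `f` is Φ-preimage-continuous and `Ker f ⊆ I`. -/
theorem stmt_6 {R S : Type*} [Ring R] [Ring S]
    (cR : AlgClosure R) (cS : AlgClosure S) (f : R →+* S)
    (hsurj : Function.Surjective f)
    (him : ∀ A : Set R, f '' (cR.cl A) ⊆ cS.cl (f '' A))
    (I : Set R) (hI : IsApproxIdeal cR I) :
    IsApproxIdeal cS (f '' I) ∧
      ((∀ B : Set S, f ⁻¹' (cS.cl B) ⊆ cR.cl (f ⁻¹' B)) →
        IsApproxPrime cR I → {x : R | f x = 0} ⊆ I →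
        IsApproxPrime cS (f '' I)) := by
  have hid : IsApproxIdeal cS (f '' I) := by
    obtain ⟨h0, ha, hn, hl, hr⟩ := hI
    refine ⟨⟨0, h0, map_zero f⟩, ?_, ?_, ?_, ?_⟩
    · rintro _ ⟨x, hx, rfl⟩ _ ⟨y, hy, rfl⟩
      exact ⟨x + y, ha x hx y hy, map_add f x y⟩
    · rintro _ ⟨x, hx, rfl⟩
      exact ⟨-x, hn x hx, map_neg f x⟩
    · rintro s _ ⟨x, hx, rfl⟩
      obtain ⟨r, rfl⟩ := hsurj s
      exact him I ⟨r * x, hl r x hx, map_mul f r x⟩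
    · rintro s _ ⟨x, hx, rfl⟩
      obtain ⟨r, rfl⟩ := hsurj s
      exact him I ⟨x * r, hr r x hx, map_mul f x r⟩
  refine ⟨hid, fun hpre hP hker => ?_⟩
  have hsat : f ⁻¹' (f '' I) = I := by
    apply Set.Subset.antisymm
    · rintro x ⟨y, hy, hxy⟩
      have h1 : x - y ∈ I := hker (by simp [hxy])
      have h2 := hI.2.1 _ h1 _ hy
      simpa using h2
    · exact Set.subset_preimage_image f I
  refine ⟨hid, ?_, ?_⟩
  · intro h
    apply hP.2.1
    rw [← hsat, h, Set.preimage_univ]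
  · intro s t hst
    obtain ⟨x, rfl⟩ := hsurj s
    obtain ⟨y, rfl⟩ := hsurj t
    have h1 : x * y ∈ f ⁻¹' (cS.cl (f '' I)) := by
      rw [Set.mem_preimage, map_mul]
      exact hst
    have h2 := hpre _ h1
    rw [hsat] at h2
    exact (hP.2.2 x y h2).imp (fun h => ⟨x, h, rfl⟩) (fun h => ⟨y, h, rfl⟩)
end

section
/- Let R be a ring, let M and M' be left R-modules carrying R-compatible module closures cl_M and cl_{M'}, and let f : M → M' be an approximate R-homomorphism that is Φ-image-morphic (f(cl_M X) ⊆ cl_{M'}(f(X)) for all X ⊆ M). Then Ker f := {x ∈ M : f(x) ∈ cl_{M'} {0}} is an additive subgroup of M, and R • Ker f ⊆ cl_M(Ker f); that is, Ker f is an approximate submodule of M. -/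
open Pointwise

/-- An `R`-compatible module closure on a left `R`-module `M` (axioms CM1–CM4). -/
structure ModClosure (R M : Type*) [Ring R] [AddCommGroup M] [Module R M] where
  cl : Set M → Set M
  extensive : ∀ X : Set M, X ⊆ cl X
  mono : ∀ X Y : Set M, X ⊆ Y → cl X ⊆ cl Y
  idem : ∀ X : Set M, cl (cl X) = cl X
  add_compat : ∀ X Y : Set M, cl X + cl Y ⊆ cl (X + Y)
  smul_compat : ∀ (r : R) (X : Set M), r • cl X ⊆ cl (r • X)

/-- Approximate `R`-homomorphism between modules with closures. -/
def IsApproxHom {R M M' : Type*} [Ring R] [AddCommGroup M] [Module R M]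
    [AddCommGroup M'] [Module R M'] (cM' : ModClosure R M') (f : M → M') : Prop :=
  (∀ x y : M, f (x + y) ∈ cM'.cl {f x + f y}) ∧
    (∀ (r : R) (x : M), f (r • x) ∈ cM'.cl {r • f x})

/-- the kernel of a Φ-image-morphic approximate homomorphism is an
approximate submodule. -/
theorem stmt_7 {R M M' : Type*} [Ring R] [AddCommGroup M] [Module R M]
    [AddCommGroup M'] [Module R M']
    (cM : ModClosure R M) (cM' : ModClosure R M') (f : M → M')
    (hf : IsApproxHom cM' f)
    (him : ∀ X : Set M, f '' cM.cl X ⊆ cM'.cl (f '' X)) :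
    (0 : M) ∈ {x : M | f x ∈ cM'.cl {0}} ∧
      (∀ x ∈ {x : M | f x ∈ cM'.cl {0}}, ∀ y ∈ {x : M | f x ∈ cM'.cl {0}},
        x + y ∈ {x : M | f x ∈ cM'.cl {0}}) ∧
      (∀ x ∈ {x : M | f x ∈ cM'.cl {0}}, -x ∈ {x : M | f x ∈ cM'.cl {0}}) ∧
      (∀ (r : R), ∀ x ∈ {x : M | f x ∈ cM'.cl {0}},
        r • x ∈ cM.cl {x : M | f x ∈ cM'.cl {0}}) := by
  have hcl : ∀ a b : M', b ∈ cM'.cl {0} → a ∈ cM'.cl {b} → a ∈ cM'.cl {0} := by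
    intro a b hb ha
    have h := cM'.mono {b} (cM'.cl {0}) (Set.singleton_subset_iff.2 hb) ha
    rwa [cM'.idem] at h
  have hsmul : ∀ (r : R) (x : M), f x ∈ cM'.cl {0} → f (r • x) ∈ cM'.cl {0} := by
    intro r x hx
    refine hcl _ _ ?_ (hf.2 r x)
    have h := cM'.smul_compat r {0} (Set.smul_mem_smul_set hx)
    rwa [Set.smul_set_singleton, smul_zero] at h
  refine ⟨?_, ?_, ?_, ?_⟩
  · have h := hf.2 0 0
    rwa [zero_smul, zero_smul] at h
  · intro x hx y hy
    refine hcl _ _ ?_ (hf.1 x y)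
    have h := cM'.add_compat {0} {0} (Set.add_mem_add hx hy)
    rwa [Set.singleton_add_singleton, add_zero] at h
  · intro x hx
    have h := hsmul (-1) x hx
    rwa [neg_one_smul] at h
  · intro r x hx
    exact cM.extensive _ (hsmul r x hx)
end

section
/- Let R be a commutative ring with unity equipped with an algebra-compatible closure cl. For ideals I, J of R, define the approximate product IJ := cl(⟨{a*b : a ∈ I, b ∈ J}⟩), where ⟨·⟩ denotes the generated ideal. Then V_Φ(I) ∪ V_Φ(J) = V_Φ(IJ); that is, for every approximately prime ideal P of R, cl(IJ) ⊆ cl P holds if and only if cl I ⊆ cl P or cl J ⊆ cl P. -/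
open Pointwise

/-- `V_Φ(I) ∪ V_Φ(J) = V_Φ(IJ)` for the approximate product
`IJ := cl ⟨{a*b : a ∈ I, b ∈ J}⟩`. -/
theorem stmt_9 {R : Type*} [CommRing R] (c : AlgClosure R) (I J : Ideal R) :
    ∀ P : Set R, IsApproxPrime c P →
      (c.cl (c.cl (Ideal.span {x : R | ∃ a ∈ I, ∃ b ∈ J, x = a * b} : Set R)) ⊆ c.cl P ↔
        c.cl (I : Set R) ⊆ c.cl P ∨ c.cl (J : Set R) ⊆ c.cl P) := by
  intro P hP
  rw [c.idem]
  constructor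
  · intro h
    by_cases hI : (I : Set R) ⊆ P
    · exact Or.inl (c.mono _ _ hI)
    · right
      obtain ⟨a, ha, haP⟩ := Set.not_subset.mp hI
      refine c.mono _ _ fun b hb => ?_
      have hab : a * b ∈ c.cl P :=
        h (c.extensive _ (Ideal.subset_span ⟨a, ha, b, hb, rfl⟩))
      exact (hP.2.2 a b hab).resolve_left haP
  · rintro (h | h)
    · refine (c.mono _ _ ?_).trans h
      refine SetLike.coe_subset_coe.mpr (Ideal.span_le.mpr ?_)
      rintro x ⟨a, ha, b, hb, rfl⟩
      exact I.mul_mem_right b ha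
    · refine (c.mono _ _ ?_).trans h
      refine SetLike.coe_subset_coe.mpr (Ideal.span_le.mpr ?_)
      rintro x ⟨a, ha, b, hb, rfl⟩
      exact J.mul_mem_left a hb
end

section
/- Let R be a commutative ring with unity equipped with an algebra-compatible closure cl. If P₁ and P₂ are distinct approximately prime ideals of R, then there exists f ∈ R such that exactly one of P₁, P₂ lies in V_Φ(⟨f⟩), where ⟨f⟩ is the principal ideal generated by f. In particular, the approximate Zariski topology on Spec_Φ(R) is T₀. -/
open Pointwise

/-- The approximate prime spectrum. -/
def SpecPhi {R : Type*} [Ring R] (c : AlgClosure R) : Set (Set R) :=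
  {P : Set R | IsApproxPrime c P}

/-- The closed sets of the approximate Zariski topology. -/
def VPhi {R : Type*} [Ring R] (c : AlgClosure R) (I : Set R) : Set (Set R) :=
  {P ∈ SpecPhi c | c.cl I ⊆ c.cl P}

theorem mem_VPhi_span_iff {R : Type*} [CommRing R] (c : AlgClosure R) (P : Set R)
    (h : IsApproxPrime c P) (f : R) :
    P ∈ VPhi c ((Ideal.span {f} : Ideal R) : Set R) ↔ f ∈ P := by
  obtain ⟨hI, hne, hp⟩ := id h
  have h1 : (1 : R) ∉ P := by
    intro h1
    apply hne
    ext x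
    simp only [Set.mem_univ, iff_true]
    have hx : x * x ∈ c.cl P := by
      have := hI.2.2.2.1 (x * x) 1 h1
      simpa using this
    exact (hp x x hx).elim id id
  have hcl : ∀ x ∈ c.cl P, x ∈ P := by
    intro x hx
    exact (hp x 1 (by simpa using hx)).resolve_right h1
  constructor
  · intro hf
    exact hcl f (hf.2 (c.extensive _ (Ideal.subset_span rfl)))
  · intro hf
    refine ⟨h, c.mono _ _ ?_⟩
    intro y hy
    obtain ⟨a, rfl⟩ := Ideal.mem_span_singleton'.1 hy
    exact hcl _ (hI.2.2.2.1 a f hf)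

/-- the T₀ property of the approximate Zariski topology:
distinct approximate primes are separated by a basic closed set `V_Φ(⟨f⟩)`. -/
theorem stmt_11 {R : Type*} [CommRing R] (c : AlgClosure R) (P₁ P₂ : Set R)
    (h₁ : IsApproxPrime c P₁) (h₂ : IsApproxPrime c P₂) (hne : P₁ ≠ P₂) :
    ∃ f : R, Xor' (P₁ ∈ VPhi c ((Ideal.span {f} : Ideal R) : Set R))
      (P₂ ∈ VPhi c ((Ideal.span {f} : Ideal R) : Set R)) := by
  simp only [mem_VPhi_span_iff c P₁ h₁, mem_VPhi_span_iff c P₂ h₂]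
  by_contra hcon
  apply hne
  ext f
  by_contra hf
  exact hcon ⟨f, by unfold Xor'; tauto⟩
end

section
/- Let R be a commutative ring with unity equipped with an algebra-compatible closure cl, and let P be an approximately prime ideal of R. Then V_Φ(P) = {P} (i.e. the only approximately prime ideal Q with cl P ⊆ cl Q is P itself) if and only if P is maximal with respect to inclusion among approximately prime ideals, i.e. there is no approximately prime ideal Q with P ⊊ Q. Consequently, Spec_Φ(R) is T₁ if and only if every approximately prime ideal is maximal by inclusion in Spec_Φ(R). -/
open Pointwise

/-- the T₁-criterion: `V_Φ(P) = {P}` iff `P` is maximal by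
inclusion among approximate primes; consequently all singletons of
`Spec_Φ(R)` are closed iff every approximate prime is maximal by inclusion. -/
theorem stmt_12 {R : Type*} [CommRing R] (c : AlgClosure R) :
    (∀ P : Set R, IsApproxPrime c P →
      (VPhi c P = {P} ↔ ¬ ∃ Q : Set R, IsApproxPrime c Q ∧ P ⊂ Q)) ∧
    ((∀ P : Set R, IsApproxPrime c P → VPhi c P = {P}) ↔
      ∀ P : Set R, IsApproxPrime c P → ¬ ∃ Q : Set R, IsApproxPrime c Q ∧ P ⊂ Q) := by
  have key : ∀ Q : Set R, IsApproxPrime c Q → c.cl Q ⊆ Q := by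
    rintro Q ⟨⟨_, _, _, h4, _⟩, hne, hp⟩ x hx
    have hx1 : x * 1 ∈ c.cl Q := by simpa using hx
    rcases hp x 1 hx1 with h | h
    · exact h
    · have h5 : x * x ∈ c.cl Q := by simpa using h4 (x * x) 1 h
      exact (hp x x h5).elim id id
  have main : ∀ P : Set R, IsApproxPrime c P →
      (VPhi c P = {P} ↔ ¬ ∃ Q : Set R, IsApproxPrime c Q ∧ P ⊂ Q) := by
    intro P hP
    constructor
    · rintro h ⟨Q, hQ, hPQ⟩
      have hm : Q ∈ VPhi c P := ⟨hQ, c.mono _ _ hPQ.subset⟩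
      rw [h] at hm
      exact hPQ.ne hm.symm
    · intro h
      ext Q
      constructor
      · rintro ⟨hQ, hPQ⟩
        have hs : P ⊆ Q := (c.extensive P).trans (hPQ.trans (key Q hQ))
        by_contra hne
        exact h ⟨Q, hQ, hs.ssubset_of_ne (fun e => hne e.symm)⟩
      · intro e
        have e2 : Q = P := e
        subst e2
        exact ⟨hP, subset_rfl⟩
  exact ⟨main, forall₂_congr main⟩
end

section
/- Let R be a commutative ring with unity equipped with an algebra-compatible closure cl, and suppose R satisfies the ascending chain condition on cl-closed ideals (every ascending chain of ideals J of R with cl J = J stabilizes). Then Spec_Φ(R) is quasi-compact: for every family (f_i)_{i ∈ Λ} of elements of R such that ⋂_{i ∈ Λ} V_Φ(⟨f_i⟩) = ∅, there exists a finite subset F ⊆ Λ with ⋂_{i ∈ F} V_Φ(⟨f_i⟩) = ∅; equivalently, every cover of Spec_Φ(R) by basic open sets D_Φ(f_i) := Spec_Φ(R) \ V_Φ(⟨f_i⟩) admits a finite subcover. -/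
open Pointwise

/-- The closure of an approximate ideal, as an ideal. -/
def clIdeal {R : Type*} [CommRing R] (c : AlgClosure R) (I : Set R) (hI : IsApproxIdeal c I) :
    Ideal R where
  carrier := c.cl I
  zero_mem' := c.extensive I hI.1
  add_mem' := by
    intro a b ha hb
    have h := c.add_compat I I (Set.add_mem_add ha hb)
    refine c.mono _ _ ?_ h
    rintro _ ⟨x, hx, y, hy, rfl⟩
    exact hI.2.1 x hx y hy
  smul_mem' := by
    intro r x hx
    have h := c.smul_left r I (Set.smul_mem_smul_set hx)
    rw [← c.idem I]
    refine c.mono _ _ ?_ h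
    rintro _ ⟨y, hy, rfl⟩
    exact hI.2.2.2.1 r y hy

theorem approx_of_ideal {R : Type*} [CommRing R] (c : AlgClosure R) (I : Ideal R) :
    IsApproxIdeal c (I : Set R) :=
  ⟨I.zero_mem, fun _ hx _ hy => I.add_mem hx hy, fun _ hx => I.neg_mem hx,
    fun r _ hx => c.extensive _ (I.mul_mem_left r hx),
    fun r _ hx => c.extensive _ (I.mul_mem_right r hx)⟩

/-- quasi-compactness of `Spec_Φ(R)` under the ascending chain
condition on `cl`-closed ideals: if the basic open sets `D_Φ(f i)` cover
`Spec_Φ(R)` (equivalently, the `V_Φ(⟨f i⟩)` have empty intersection inside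
`Spec_Φ(R)`), then finitely many already do. -/
theorem stmt_13 {R : Type*} [CommRing R] (c : AlgClosure R)
    (hacc : ∀ J : ℕ → Ideal R, (∀ n, c.cl ((J n : Ideal R) : Set R) = ((J n : Ideal R) : Set R)) →
      (∀ n, J n ≤ J (n + 1)) → ∃ N, ∀ n ≥ N, J n = J N) :
    ∀ {ι : Type*} (f : ι → R),
      SpecPhi c ∩ (⋂ i : ι, VPhi c ((Ideal.span {f i} : Ideal R) : Set R)) = ∅ →
      ∃ F : Finset ι,
        SpecPhi c ∩ (⋂ i ∈ F, VPhi c ((Ideal.span {f i} : Ideal R) : Set R)) = ∅ := by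
  intro ι f hf
  classical
  let T := {J : Ideal R // c.cl (J : Set R) = (J : Set R)}
  have hwf : WellFoundedGT T := by
    rw [wellFoundedGT_iff_monotone_chain_condition]
    intro a
    obtain ⟨N, hN⟩ := hacc (fun n => (a n).1) (fun n => (a n).2)
      (fun n => a.monotone (Nat.le_succ n))
    exact ⟨N, fun m hm => Subtype.ext (hN m hm).symm⟩
  let g : Finset ι → T := fun F =>
    ⟨clIdeal c _ (approx_of_ideal c (Ideal.span (f '' (F : Set ι)))), c.idem _⟩
  have hg : ∀ F : Finset ι, ∀ i ∈ F, f i ∈ (g F).1 := fun F i hi =>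
    c.extensive _ (Ideal.subset_span ⟨i, hi, rfl⟩)
  obtain ⟨_, ⟨F, rfl⟩, hF⟩ := hwf.wf.has_min (Set.range g) ⟨_, ⟨∅, rfl⟩⟩
  have hall : ∀ i, f i ∈ (g F).1 := by
    intro i
    have hle : g F ≤ g (insert i F) := by
      refine c.mono _ _ (Ideal.span_mono (Set.image_mono ?_))
      exact_mod_cast Finset.subset_insert i F
    have heq : g F = g (insert i F) := by
      by_contra hne
      exact hF _ ⟨_, rfl⟩ (lt_of_le_of_ne hle hne)
    rw [heq]
    exact hg _ i (Finset.mem_insert_self i F)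
  refine ⟨F, ?_⟩
  rw [Set.eq_empty_iff_forall_notMem] at hf ⊢
  rintro P ⟨hP, hPF⟩
  refine hf P ⟨hP, ?_⟩
  simp only [Set.mem_iInter] at hPF ⊢
  have hsub : (g F).1 ≤ clIdeal c P hP.1 := by
    have h1 : Ideal.span (f '' (F : Set ι)) ≤ clIdeal c P hP.1 := by
      rw [Ideal.span_le]
      rintro _ ⟨i, hi, rfl⟩
      exact (hPF i hi).2 (c.extensive _ (Ideal.subset_span rfl))
    intro x hx
    have h2 : x ∈ c.cl (c.cl P) := c.mono _ _ h1 hx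
    rw [c.idem] at h2
    exact h2
  intro i
  refine ⟨hP, ?_⟩
  have h3 : Ideal.span {f i} ≤ clIdeal c P hP.1 := by
    rw [Ideal.span_le]
    rintro _ rfl
    exact hsub (hall i)
  have h4 := c.mono _ (c.cl P) h3
  rwa [c.idem] at h4
end

section
/- Fix an integer m ≥ 2 and equip ℤ with the modular closure cl(A) := ⟨A⟩ + mℤ. Then the approximately prime ideals of ℤ are exactly the ideals pℤ where p is a prime number dividing m; i.e. Spec_Φ(ℤ) = {pℤ : p prime, p ∣ m}. Moreover, for every n ∈ ℤ, V_Φ(nℤ) = {pℤ : p prime, p ∣ m and p ∣ n}. In particular Spec_Φ(ℤ) is a finite set and the approximate Zariski topology on it is discrete. -/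
/-- The modular closure on `ℤ`: `cl(A) = ⟨A⟩ + mℤ`. -/
def modCl (m : ℤ) (A : Set ℤ) : Set ℤ :=
  ((Ideal.span A + Ideal.span {m} : Ideal ℤ) : Set ℤ)

/-- Approximate ideal of `ℤ` w.r.t. the modular closure. -/
def IsApproxIdealZ (m : ℤ) (I : Set ℤ) : Prop :=
  (0 : ℤ) ∈ I ∧ (∀ x ∈ I, ∀ y ∈ I, x + y ∈ I) ∧ (∀ x ∈ I, -x ∈ I) ∧
    (∀ (r : ℤ), ∀ x ∈ I, r * x ∈ modCl m I)

/-- Approximately prime ideal of `ℤ` w.r.t. the modular closure. -/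
def IsApproxPrimeZ (m : ℤ) (P : Set ℤ) : Prop :=
  IsApproxIdealZ m P ∧ P ≠ Set.univ ∧
    ∀ x y : ℤ, x * y ∈ modCl m P → x ∈ P ∨ y ∈ P

/-- The approximate prime spectrum of `ℤ`. -/
def SpecPhiZ (m : ℤ) : Set (Set ℤ) := {P | IsApproxPrimeZ m P}

/-- Closed sets of the approximate Zariski topology on `Spec_Φ(ℤ)`. -/
def VPhiZ (m : ℤ) (I : Set ℤ) : Set (Set ℤ) :=
  {P ∈ SpecPhiZ m | modCl m I ⊆ modCl m P}

theorem modCl_ideal (m : ℤ) (I : Ideal ℤ) (h : m ∈ I) : modCl m (I : Set ℤ) = I := by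
  unfold modCl
  rw [Ideal.span_eq, Submodule.add_eq_sup, sup_eq_left.2]
  rwa [Ideal.span_singleton_le_iff_mem]

theorem spec_ideal (m : ℤ) (P : Set ℤ) (hP : P ∈ SpecPhiZ m) :
    ∃ I : Ideal ℤ, I.IsPrime ∧ m ∈ I ∧ P = I := by
  obtain ⟨⟨h0, hadd, hneg, -⟩, hne, hpr⟩ := hP
  have h1 : (1 : ℤ) ∉ P := by
    intro h1
    apply hne
    let G : AddSubgroup ℤ :=
      { carrier := P, zero_mem' := h0, add_mem' := fun {a b} ha hb => hadd a ha b hb,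
        neg_mem' := fun {a} ha => hneg a ha }
    ext x
    have : x • (1 : ℤ) ∈ G := G.zsmul_mem h1 x
    simp only [smul_eq_mul, mul_one] at this
    exact ⟨fun _ => trivial, fun _ => this⟩
  have hsub : modCl m P = P := by
    apply Set.Subset.antisymm
    · intro x hx
      rcases hpr x 1 (by rwa [mul_one]) with h | h
      · exact h
      · exact absurd h h1
    · intro x hx
      exact Ideal.mem_sup_left (Ideal.subset_span hx)
  refine ⟨Ideal.span P + Ideal.span {m}, ?_, ?_, hsub.symm⟩
  · have key : ∀ x, x ∈ (Ideal.span P + Ideal.span {m} : Ideal ℤ) ↔ x ∈ P := fun x =>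
      Set.ext_iff.1 hsub x
    refine ⟨fun h => h1 ((key 1).1 (h ▸ Submodule.mem_top)), fun {x y} hxy => ?_⟩
    rw [key, key]
    exact hpr x y hxy
  · exact Ideal.mem_sup_right (Ideal.mem_span_singleton_self m)

theorem spec_eq (m : ℤ) (hm : 2 ≤ m) :
    SpecPhiZ m = {P : Set ℤ | ∃ p : ℕ, p.Prime ∧ (p : ℤ) ∣ m ∧
        P = ((Ideal.span {(p : ℤ)} : Ideal ℤ) : Set ℤ)} := by
  ext P
  constructor
  · intro hP
    obtain ⟨I, hI, hmI, rfl⟩ := spec_ideal m P hP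
    obtain ⟨g, rfl⟩ : ∃ g : ℤ, I = Ideal.span {g} :=
      ⟨_, (Ideal.span_singleton_generator I).symm⟩
    have hgm : g ∣ m := Ideal.mem_span_singleton.1 hmI
    have hg0 : g ≠ 0 := by
      rintro rfl
      rw [zero_dvd_iff] at hgm
      omega
    have hg : Prime g := (Ideal.span_singleton_prime hg0).1 hI
    refine ⟨g.natAbs, Int.prime_iff_natAbs_prime.1 hg, Int.natAbs_dvd.2 hgm, ?_⟩
    rw [Int.span_natAbs]
  · rintro ⟨p, hp, hpm, rfl⟩
    have hpZ : Prime (p : ℤ) := Nat.prime_iff_prime_int.1 hp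
    have hpr : (Ideal.span {(p : ℤ)}).IsPrime := (Ideal.span_singleton_prime hpZ.ne_zero).2 hpZ
    have hcl := modCl_ideal m (Ideal.span {(p : ℤ)}) (Ideal.mem_span_singleton.2 hpm)
    refine ⟨⟨Ideal.zero_mem _, fun x hx y hy => Ideal.add_mem _ hx hy,
      fun x hx => neg_mem (S := Ideal ℤ) hx, fun r x hx => ?_⟩, fun h => ?_, fun x y hxy => ?_⟩
    · rw [hcl]
      exact Ideal.mul_mem_left _ r hx
    · apply hpr.ne_top
      exact SetLike.coe_injective h
    · rw [hcl] at hxy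
      exact hpr.mem_or_mem hxy

theorem V_eq (m : ℤ) (hm : 2 ≤ m) (n : ℤ) :
    VPhiZ m ((Ideal.span {n} : Ideal ℤ) : Set ℤ) =
        {P : Set ℤ | ∃ p : ℕ, p.Prime ∧ (p : ℤ) ∣ m ∧ (p : ℤ) ∣ n ∧
          P = ((Ideal.span {(p : ℤ)} : Ideal ℤ) : Set ℤ)} := by
  ext P
  unfold VPhiZ
  rw [spec_eq m hm]
  constructor
  · rintro ⟨⟨p, hp, hpm, rfl⟩, hs⟩
    rw [modCl_ideal m (Ideal.span {(p : ℤ)}) (Ideal.mem_span_singleton.2 hpm)] at hs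
    refine ⟨p, hp, hpm, Ideal.mem_span_singleton.1 (hs ?_), rfl⟩
    exact Ideal.mem_sup_left (Ideal.subset_span (Ideal.mem_span_singleton_self n))
  · rintro ⟨p, hp, hpm, hpn, rfl⟩
    refine ⟨⟨p, hp, hpm, rfl⟩, ?_⟩
    rw [modCl_ideal m (Ideal.span {(p : ℤ)}) (Ideal.mem_span_singleton.2 hpm)]
    unfold modCl
    rw [Ideal.span_eq]
    apply SetLike.coe_subset_coe.2
    apply sup_le
    · exact Ideal.span_singleton_le_span_singleton.2 hpn
    · exact Ideal.span_singleton_le_span_singleton.2 hpm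

/-- `Spec_Φ(ℤ)` under the modular closure consists exactly of the
`pℤ` with `p` prime dividing `m`; `V_Φ(nℤ)` consists of those with moreover
`p ∣ n`; the spectrum is finite, and every singleton is closed (so the topology
is discrete). -/
theorem stmt_14 (m : ℤ) (hm : 2 ≤ m) :
    SpecPhiZ m = {P : Set ℤ | ∃ p : ℕ, p.Prime ∧ (p : ℤ) ∣ m ∧
        P = ((Ideal.span {(p : ℤ)} : Ideal ℤ) : Set ℤ)} ∧
      (∀ n : ℤ, VPhiZ m ((Ideal.span {n} : Ideal ℤ) : Set ℤ) =
        {P : Set ℤ | ∃ p : ℕ, p.Prime ∧ (p : ℤ) ∣ m ∧ (p : ℤ) ∣ n ∧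
          P = ((Ideal.span {(p : ℤ)} : Ideal ℤ) : Set ℤ)}) ∧
      (SpecPhiZ m).Finite ∧
      (∀ P ∈ SpecPhiZ m, ∃ I : Ideal ℤ, VPhiZ m ((I : Ideal ℤ) : Set ℤ) = {P}) := by
  refine ⟨spec_eq m hm, V_eq m hm, ?_, ?_⟩
  · rw [spec_eq m hm]
    apply ((Set.finite_le_nat m.natAbs).image
      (fun p : ℕ => ((Ideal.span {(p : ℤ)} : Ideal ℤ) : Set ℤ))).subset
    rintro P ⟨p, hp, hpm, rfl⟩
    refine ⟨p, ?_, rfl⟩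
    exact Nat.le_of_dvd (by omega) (Int.natCast_dvd.1 hpm)
  · intro P hP
    rw [spec_eq m hm] at hP
    obtain ⟨p, hp, hpm, rfl⟩ := hP
    refine ⟨Ideal.span {(p : ℤ)}, ?_⟩
    rw [V_eq m hm]
    ext Q
    constructor
    · rintro ⟨q, hq, hqm, hqp, rfl⟩
      have : q = p := (Nat.prime_dvd_prime_iff_eq hq hp).1 (Int.natCast_dvd_natCast.1 hqp)
      rw [this]
      rfl
    · intro h
      exact ⟨p, hp, hpm, dvd_rfl, h⟩
end
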